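/- Let (R, 𝔪) be a commutative noetherian local ring with an isolated singularity whose maximal ideal 𝔪 is quasi-decomposable with an R-regular sequence 𝐱 of length n. If 𝒳 is a thick subcategory of mod R containing R and containing at least one module of projective dimension ≥ n + 2, then 𝒳 = mod R. -/

import Mathlib

/-!
The proof has two halves: the residue field `k` lies in `𝒳`, and over an isolated singularity a
thick subcategory containing `R` and `k` is all of `mod R`.

*The residue field.* Suppose first that `𝔪 = I ⊕ J` with `I, J ≠ 0`, and that `𝒳` contains a module
of projective dimension at least `2`. Its second syzygy `L` is the kernel of a map of free modules
and lies in `𝔪 Rᵏ = I Rᵏ ⊕ J Rᵏ`; the map respects this decomposition, so `L ∩ I Rᵏ` and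
`L ∩ J Rᵏ` are direct summands of `L`. A nonzero one among them is killed by `J` or by `I`
(`ideal_mem_of_mem_syzygy`). If a nonzero `A ∈ 𝒳` is killed by `I`, then `I` is a direct summand of
the first syzygy of `A` (`ideal_mem_of_killed`); as `I` is killed by `J`, also `J ∈ 𝒳`. Hence
`𝔪 ≅ I × J` and `k = R / 𝔪` lie in `𝒳` (`residue_mem_of_decomposable`). In the quasi-decomposable
case the regular sequence is killed one element at a time. A regular element `x` is regular on a
first syzygy `K` of the given module, so `K / xK` lies in the thick subcategory of modules over
`R / (x)` which belong to `𝒳`, and its projective dimension over `R / (x)` is at least that of `K`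
over `R` (`residue_mem_of_quasi_decomposable`).

*Generation by `R` and `k`.* By noetherian induction and prime filtrations it suffices to show that
`R / 𝔭 ∈ 𝒳` for a nonmaximal prime `𝔭`, assuming that every module killed by an ideal strictly
larger than `𝔭` is in `𝒳`. The ring `R_𝔭` is regular, so the residue field of `R_𝔭` has finite
projective dimension (`IsRegularLocal.exists_PD`) and some syzygy `Ωᵈ` of `R / 𝔭` is projective at
`𝔭`. Hence the cover `F → Ωᵈ` has a section up to multiplication by some `x ∉ 𝔭`. Let `Qᵢ` be the
pullback of the cover of `Ωⁱ` along multiplication by `x` on `Ωⁱ`. Then `Q₀` is the kernel of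
`F → (R / 𝔭) / x`, so `Q₀ ∈ 𝒳`; each `Qᵢ₊₁` is a syzygy of `Qᵢ`, so `Q_d ∈ 𝒳`; and `Ωᵈ` is a direct
summand of `Q_d`. Therefore `Ωᵈ`, and then `R / 𝔭`, is in `𝒳` (`quotient_prime_mem`).
-/

universe u

open IsLocalRing CategoryTheory

/-- A minimal free resolution of the module `M` over the local ring `R`:
`⋯ → R^{rank 2} → R^{rank 1} → R^{rank 0} → M → 0` is exact, and each differential maps into
`𝔪` times the next free module (minimality). -/
structure MinimalFreeResolution (R : Type u) [CommRing R] [IsLocalRing R]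
    (M : Type u) [AddCommGroup M] [Module R M] where
  rank : ℕ → ℕ
  aug : (Fin (rank 0) → R) →ₗ[R] M
  d : (i : ℕ) → ((Fin (rank (i + 1)) → R) →ₗ[R] (Fin (rank i) → R))
  aug_surjective : Function.Surjective aug
  exact_aug : LinearMap.ker aug = LinearMap.range (d 0)
  exact : ∀ i, LinearMap.ker (d i) = LinearMap.range (d (i + 1))
  minimal : ∀ i, LinearMap.range (d i) ≤
    (maximalIdeal R) • (⊤ : Submodule R (Fin (rank i) → R))

/-- `S` is an `i`-th syzygy `Ω^i M` of `M`, i.e. the `i`-th kernel computed from a minimal free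
resolution of `M` over the local ring `R` (`Ω⁰M = M`, `Ω¹M = ker aug`, `Ω^{j+2}M = ker (d j)`). -/
def IsNthSyzygy (R : Type u) [CommRing R] [IsLocalRing R] (i : ℕ)
    (M : Type u) [AddCommGroup M] [Module R M]
    (S : Type u) [AddCommGroup S] [Module R S] : Prop :=
  ∃ F : MinimalFreeResolution R M,
    match i with
    | 0 => Nonempty (S ≃ₗ[R] M)
    | 1 => Nonempty (S ≃ₗ[R] LinearMap.ker F.aug)
    | (j + 2) => Nonempty (S ≃ₗ[R] LinearMap.ker (F.d j))

/-- `pd_R M ≤ n`: a minimal free resolution of `M` vanishes in homological degrees `> n`. -/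
def ProjDimLE (R : Type u) [CommRing R] [IsLocalRing R]
    (M : Type u) [AddCommGroup M] [Module R M] (n : ℕ) : Prop :=
  ∃ F : MinimalFreeResolution R M, ∀ i, n < i → F.rank i = 0

/-- `A` is a direct summand of the `R`-module `X`. -/
def IsDirectSummand (R : Type u) [CommRing R] (A X : Type u)
    [AddCommGroup A] [Module R A] [AddCommGroup X] [Module R X] : Prop :=
  ∃ (ι : A →ₗ[R] X) (π : X →ₗ[R] A), π.comp ι = LinearMap.id

/-- A thick subcategory of `mod R` (the finitely generated `R`-modules): a collection of (f.g.)
modules, closed under isomorphism and direct summands, satisfying two-out-of-three for short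
exact sequences. -/
structure IsThickSubcat (R : Type u) [CommRing R] (P : ModuleCat.{u} R → Prop) : Prop where
  fg : ∀ A, P A → Module.Finite R A
  iso_closed : ∀ A B : ModuleCat.{u} R, Nonempty (A ≃ₗ[R] B) → P A → P B
  summand_closed : ∀ A B : ModuleCat.{u} R,
    (∃ (ι : B →ₗ[R] A) (π : A →ₗ[R] B), π.comp ι = LinearMap.id) → P A → P B
  two_of_three : ∀ (A B C : ModuleCat.{u} R) (f : A →ₗ[R] B) (g : B →ₗ[R] C),
    Function.Injective f → Function.Surjective g → LinearMap.ker g = LinearMap.range f →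
    ((P A → P B → P C) ∧ (P A → P C → P B) ∧ (P B → P C → P A))

/-- A module is decomposable if it is the (internal) direct sum of two nonzero submodules. -/
def IsDecomposableModule (A : Type u) [CommRing A] (M : Type u) [AddCommGroup M]
    [Module A M] : Prop :=
  ∃ N₁ N₂ : Submodule A M, N₁ ≠ ⊥ ∧ N₂ ≠ ⊥ ∧ N₁ ⊓ N₂ = ⊥ ∧ N₁ ⊔ N₂ = ⊤

/-- The maximal ideal `𝔪` of `R` is quasi-decomposable: there is an `R`-regular sequence `𝐱` in
`𝔪` such that `𝔪/(𝐱)` is decomposable. -/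
def HasQuasiDecomposableMaxIdeal (R : Type u) [CommRing R] [IsLocalRing R] : Prop :=
  ∃ x : List R, (∀ a ∈ x, a ∈ maximalIdeal R) ∧ RingTheory.Sequence.IsRegular R x ∧
    IsDecomposableModule (R ⧸ Ideal.ofList x)
      (↥((maximalIdeal R).map (Ideal.Quotient.mk (Ideal.ofList x))))

/-- A commutative ring is regular local if it is noetherian local and its maximal ideal can be
generated by `dim`-many elements. -/
def IsRegularLocal (A : Type u) [CommRing A] : Prop :=
  IsNoetherianRing A ∧ ∃ _h : IsLocalRing A, ∃ s : Finset A,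
    Ideal.span (s : Set A) = maximalIdeal A ∧
    (s.card : WithBot (WithTop ℕ)) = ringKrullDim A

/-- `R` has an isolated singularity: `R_𝔭` is regular local for every non-maximal prime `𝔭`. -/
def HasIsolatedSingularity (R : Type u) [CommRing R] [IsLocalRing R] : Prop :=
  ∀ (p : Ideal R) [p.IsPrime], p ≠ maximalIdeal R → IsRegularLocal (Localization.AtPrime p)

/-! ### Closure properties of thick subcategories -/

namespace IsThickSubcat

variable {R : Type u} [CommRing R] {P : ModuleCat.{u} R → Prop}

lemma congr (T : IsThickSubcat R P) {A B : Type u} [AddCommGroup A] [Module R A]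
    [AddCommGroup B] [Module R B] (e : A ≃ₗ[R] B) (hA : P (ModuleCat.of R A)) :
    P (ModuleCat.of R B) :=
  T.iso_closed _ _ ⟨e⟩ hA

lemma summand (T : IsThickSubcat R P) {A B : Type u} [AddCommGroup A] [Module R A]
    [AddCommGroup B] [Module R B] (ι : B →ₗ[R] A) (π : A →ₗ[R] B) (h : ∀ b, π (ι b) = b)
    (hA : P (ModuleCat.of R A)) : P (ModuleCat.of R B) :=
  T.summand_closed _ _ ⟨ι, π, LinearMap.ext h⟩ hA

lemma left (T : IsThickSubcat R P) {A B C : Type u} [AddCommGroup A] [Module R A]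
    [AddCommGroup B] [Module R B] [AddCommGroup C] [Module R C] (f : A →ₗ[R] B) (g : B →ₗ[R] C)
    (hf : Function.Injective f) (hg : Function.Surjective g) (h : Function.Exact f g)
    (hB : P (ModuleCat.of R B)) (hC : P (ModuleCat.of R C)) : P (ModuleCat.of R A) :=
  (T.two_of_three (.of R A) (.of R B) (.of R C) f g hf hg h.linearMap_ker_eq).2.2 hB hC

lemma middle (T : IsThickSubcat R P) {A B C : Type u} [AddCommGroup A] [Module R A]
    [AddCommGroup B] [Module R B] [AddCommGroup C] [Module R C] (f : A →ₗ[R] B) (g : B →ₗ[R] C)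
    (hf : Function.Injective f) (hg : Function.Surjective g) (h : Function.Exact f g)
    (hA : P (ModuleCat.of R A)) (hC : P (ModuleCat.of R C)) : P (ModuleCat.of R B) :=
  (T.two_of_three (.of R A) (.of R B) (.of R C) f g hf hg h.linearMap_ker_eq).2.1 hA hC

lemma right (T : IsThickSubcat R P) {A B C : Type u} [AddCommGroup A] [Module R A]
    [AddCommGroup B] [Module R B] [AddCommGroup C] [Module R C] (f : A →ₗ[R] B) (g : B →ₗ[R] C)
    (hf : Function.Injective f) (hg : Function.Surjective g) (h : Function.Exact f g)
    (hA : P (ModuleCat.of R A)) (hB : P (ModuleCat.of R B)) : P (ModuleCat.of R C) :=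
  (T.two_of_three (.of R A) (.of R B) (.of R C) f g hf hg h.linearMap_ker_eq).1 hA hB

lemma ker (T : IsThickSubcat R P) {B C : Type u}
    [AddCommGroup B] [Module R B] [AddCommGroup C] [Module R C] (g : B →ₗ[R] C)
    (hg : Function.Surjective g)
    (hB : P (ModuleCat.of R B)) (hC : P (ModuleCat.of R C)) :
    P (ModuleCat.of R (LinearMap.ker g)) :=
  T.left (LinearMap.ker g).subtype g (Submodule.injective_subtype _) hg
    (LinearMap.exact_subtype_ker_map g) hB hC

lemma of_ker (T : IsThickSubcat R P) {B C : Type u}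
    [AddCommGroup B] [Module R B] [AddCommGroup C] [Module R C] (g : B →ₗ[R] C)
    (hg : Function.Surjective g)
    (hB : P (ModuleCat.of R B)) (hK : P (ModuleCat.of R (LinearMap.ker g))) :
    P (ModuleCat.of R C) :=
  T.right (LinearMap.ker g).subtype g (Submodule.injective_subtype _) hg
    (LinearMap.exact_subtype_ker_map g) hK hB

lemma quotient (T : IsThickSubcat R P) {B : Type u} [AddCommGroup B] [Module R B]
    (N : Submodule R B) (hB : P (ModuleCat.of R B)) (hN : P (ModuleCat.of R N)) :
    P (ModuleCat.of R (B ⧸ N)) :=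
  T.right N.subtype N.mkQ (Submodule.injective_subtype _) (Submodule.mkQ_surjective _)
    (LinearMap.exact_subtype_mkQ N) hN hB

lemma prod (T : IsThickSubcat R P) {A B : Type u} [AddCommGroup A] [Module R A]
    [AddCommGroup B] [Module R B] (hA : P (ModuleCat.of R A)) (hB : P (ModuleCat.of R B)) :
    P (ModuleCat.of R (A × B)) :=
  T.middle (LinearMap.inl R A B) (LinearMap.snd R A B) LinearMap.inl_injective
    LinearMap.snd_surjective .inl_snd hA hB

lemma subsingleton (T : IsThickSubcat R P) (hR : P (ModuleCat.of R R)) (A : Type u)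
    [AddCommGroup A] [Module R A] [Subsingleton A] : P (ModuleCat.of R A) :=
  T.summand (0 : A →ₗ[R] R) 0 (fun _ => Subsingleton.elim _ _) hR

lemma free (T : IsThickSubcat R P) (hR : P (ModuleCat.of R R)) (n : ℕ) :
    P (ModuleCat.of R (Fin n → R)) := by
  induction n with
  | zero => exact T.subsingleton hR _
  | succ n ih => exact T.congr (Fin.consLinearEquiv R (fun _ : Fin (n + 1) => R)) (T.prod hR ih)

end IsThickSubcat

/-! ### Minimal covers -/

section Covers

variable {R : Type u} [CommRing R]

lemma apply_mem_of_mem_smul_top {k : ℕ} (I : Ideal R) {v : Fin k → R}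
    (hv : v ∈ I • (⊤ : Submodule R (Fin k → R))) (i : Fin k) : v i ∈ I := by
  induction hv using Submodule.smul_induction_on' with
  | smul r hr n hn => exact I.mul_mem_right _ hr
  | add x hx y hy h1 h2 => exact I.add_mem h1 h2

lemma mem_smul_top_of_apply_mem {k : ℕ} (I : Ideal R) {v : Fin k → R}
    (hv : ∀ i, v i ∈ I) : v ∈ I • (⊤ : Submodule R (Fin k → R)) := by
  rw [pi_eq_sum_univ v]
  exact Submodule.sum_mem _ fun i _ => Submodule.smul_mem_smul (hv i) trivial

/-- Lifting a basis of `k ⊗ M` gives a minimal free cover, by Nakayama. -/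
lemma exists_minimal_cover [IsLocalRing R] (M : Type u) [AddCommGroup M] [Module R M]
    [Module.Finite R M] :
    ∃ (k : ℕ) (π : (Fin k → R) →ₗ[R] M), Function.Surjective π ∧
      LinearMap.ker π ≤ maximalIdeal R • (⊤ : Submodule R (Fin k → R)) := by
  classical
  let b := Module.finBasis (ResidueField R) (TensorProduct R (ResidueField R) M)
  have hs : Function.Surjective (TensorProduct.mk R (ResidueField R) M 1) :=
    TensorProduct.mk_surjective R M (ResidueField R) Ideal.Quotient.mk_surjective
  choose f hf using fun i => hs (b i)
  refine ⟨_, Fintype.linearCombination R f, ?_, ?_⟩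
  · rw [← LinearMap.range_eq_top, Fintype.range_linearCombination]
    exact span_eq_top_of_tmul_eq_basis f b hf
  · intro v hv
    refine mem_smul_top_of_apply_mem _ fun i => ?_
    rw [LinearMap.mem_ker, Fintype.linearCombination_apply] at hv
    have h2 : ∑ i, (residue R (v i)) • b i = 0 := by
      have := congrArg (TensorProduct.mk R (ResidueField R) M 1) hv
      rw [map_sum, map_zero] at this
      rw [← this]
      refine Finset.sum_congr rfl fun i _ => ?_
      rw [map_smul, hf]
      exact (algebraMap_smul (ResidueField R) (v i) (b i)).symm ▸ rfl
    have := Fintype.linearIndependent_iff.1 b.linearIndependent _ h2 i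
    exact (residue_eq_zero_iff _).1 this

/-- The kernel of a minimal cover of a projective module vanishes: a splitting `s` satisfies
`F = s(M) + 𝔪F`, so `s` is onto by Nakayama. -/
lemma ker_eq_bot_of_projective [IsLocalRing R] {M : Type u} [AddCommGroup M] [Module R M]
    [Module.Projective R M] {k : ℕ} (π : (Fin k → R) →ₗ[R] M) (hπ : Function.Surjective π)
    (hm : LinearMap.ker π ≤ maximalIdeal R • (⊤ : Submodule R (Fin k → R))) :
    LinearMap.ker π = ⊥ := by
  obtain ⟨s, hs⟩ := Module.projective_lifting_property π LinearMap.id hπ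
  have hs' : ∀ m, π (s m) = m := fun m => LinearMap.congr_fun hs m
  have htop : (⊤ : Submodule R (Fin k → R)) ≤ LinearMap.range s := by
    refine Submodule.le_of_le_smul_of_le_jacobson_bot Module.Finite.fg_top
      (IsLocalRing.maximalIdeal_le_jacobson ⊥) ?_
    intro v _
    have : v = s (π v) + (v - s (π v)) := by abel
    rw [this]
    refine Submodule.add_mem_sup ⟨_, rfl⟩ (hm ?_)
    simp [hs']
  rw [LinearMap.ker_eq_bot']
  intro v hv
  obtain ⟨m, rfl⟩ := htop (Submodule.mem_top (x := v))
  rw [hs'] at hv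
  rw [hv, map_zero]

end Covers

/-! ### Projective dimension along short exact sequences -/

section ProjDim

variable {R : Type u} [CommRing R]

/-- `pd_R M ≤ n`, phrased through the vanishing of `Ext`. -/
def PD (R : Type u) [CommRing R] (M : Type u) [AddCommGroup M] [Module R M] (n : ℕ) : Prop :=
  HasProjectiveDimensionLE (ModuleCat.of R M) n

lemma PD_zero_iff {M : Type u} [AddCommGroup M] [Module R M] :
    PD R M 0 ↔ Module.Projective R M := by
  rw [PD, ← projective_iff_hasProjectiveDimensionLE_zero, ← IsProjective.iff_projective]

lemma PD_succ_iff {A B C : Type u} [AddCommGroup A] [Module R A]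
    [AddCommGroup B] [Module R B] [AddCommGroup C] [Module R C] [Module.Projective R B]
    (f : A →ₗ[R] B) (g : B →ₗ[R] C) (hf : Function.Injective f) (hg : Function.Surjective g)
    (h : Function.Exact f g) (n : ℕ) : PD R C (n + 1) ↔ PD R A n := by
  let S : ShortComplex (ModuleCat.{u} R) :=
    ShortComplex.mk (ModuleCat.ofHom f) (ModuleCat.ofHom g) (by
      ext x; exact h.apply_apply_eq_zero x)
  have hS : S.ShortExact :=
    { exact := (ShortComplex.ShortExact.moduleCat_exact_iff_function_exact _).mpr h
      mono_f := (ModuleCat.mono_iff_injective _).mpr hf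
      epi_g := (ModuleCat.epi_iff_surjective _).mpr hg }
  have hp : Projective S.X₂ := (IsProjective.iff_projective (R := R) (P := B)).1 inferInstance
  exact hS.hasProjectiveDimensionLT_X₃_iff n hp

lemma PD_succ_iff_ker {B C : Type u}
    [AddCommGroup B] [Module R B] [AddCommGroup C] [Module R C] [Module.Projective R B]
    (g : B →ₗ[R] C) (hg : Function.Surjective g) (n : ℕ) :
    PD R C (n + 1) ↔ PD R (LinearMap.ker g) n :=
  PD_succ_iff (LinearMap.ker g).subtype g (Submodule.injective_subtype _) hg
    (LinearMap.exact_subtype_ker_map g) n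

end ProjDim

/-! ### Iterated minimal syzygies -/

section Syzygies

variable {R : Type u} [CommRing R] [IsLocalRing R]

/-- Rank of a chosen minimal free cover of a finitely generated module. -/
noncomputable def coverRank (M : {M : ModuleCat.{u} R // Module.Finite R M}) : ℕ :=
  haveI := M.2
  (exists_minimal_cover (R := R) M.1).choose

/-- A chosen minimal free cover of a finitely generated module. -/
noncomputable def cover (M : {M : ModuleCat.{u} R // Module.Finite R M}) :
    (Fin (coverRank M) → R) →ₗ[R] M.1 :=
  haveI := M.2
  (exists_minimal_cover (R := R) M.1).choose_spec.choose

lemma cover_surjective (M : {M : ModuleCat.{u} R // Module.Finite R M}) :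
    Function.Surjective (cover M) :=
  haveI := M.2
  (exists_minimal_cover (R := R) M.1).choose_spec.choose_spec.1

lemma ker_cover_le (M : {M : ModuleCat.{u} R // Module.Finite R M}) :
    LinearMap.ker (cover M) ≤ maximalIdeal R • (⊤ : Submodule R (Fin (coverRank M) → R)) :=
  haveI := M.2
  (exists_minimal_cover (R := R) M.1).choose_spec.choose_spec.2

lemma coverRank_eq_zero (M : {M : ModuleCat.{u} R // Module.Finite R M})
    (h : Subsingleton M.1) : coverRank M = 0 := by
  by_contra hne
  have hk := ker_cover_le M
  have : (Pi.single ⟨0, Nat.pos_of_ne_zero hne⟩ 1 : Fin (coverRank M) → R) ∈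
      LinearMap.ker (cover M) := Subsingleton.elim _ _
  have h1 := apply_mem_of_mem_smul_top _ (hk this) ⟨0, Nat.pos_of_ne_zero hne⟩
  rw [Pi.single_eq_same] at h1
  exact (Ideal.ne_top_iff_one _).1 (maximalIdeal.isMaximal R).ne_top h1

variable [IsNoetherianRing R]

/-- The `i`-th syzygy of `M` with respect to the chosen minimal covers. -/
noncomputable def syz (M : {M : ModuleCat.{u} R // Module.Finite R M}) :
    ℕ → {M : ModuleCat.{u} R // Module.Finite R M}
  | 0 => M
  | i + 1 => ⟨ModuleCat.of R (LinearMap.ker (cover (syz M i))), by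
      change Module.Finite R (LinearMap.ker (cover (syz M i))); infer_instance⟩

/-- The inclusion of a syzygy into the free cover of the preceding one. -/
noncomputable def syzIncl (M : {M : ModuleCat.{u} R // Module.Finite R M}) (i : ℕ) :
    (syz M (i + 1)).1 →ₗ[R] (Fin (coverRank (syz M i)) → R) :=
  (LinearMap.ker (cover (syz M i))).subtype

lemma syzIncl_injective (M : {M : ModuleCat.{u} R // Module.Finite R M}) (i : ℕ) :
    Function.Injective (syzIncl M i) :=
  Submodule.injective_subtype (LinearMap.ker (cover (syz M i)))

lemma range_syzIncl (M : {M : ModuleCat.{u} R // Module.Finite R M}) (i : ℕ) :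
    LinearMap.range (syzIncl M i) = LinearMap.ker (cover (syz M i)) :=
  Submodule.range_subtype (LinearMap.ker (cover (syz M i)))

lemma exact_syzIncl_cover (M : {M : ModuleCat.{u} R // Module.Finite R M}) (i : ℕ) :
    Function.Exact (syzIncl M i) (cover (syz M i)) :=
  LinearMap.exact_iff.2 (range_syzIncl M i).symm

lemma range_syzIncl_comp_cover (M : {M : ModuleCat.{u} R // Module.Finite R M}) (i : ℕ) :
    LinearMap.range (syzIncl M i ∘ₗ cover (syz M (i + 1))) = LinearMap.ker (cover (syz M i)) := by
  rw [LinearMap.range_comp_of_range_eq_top _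
    (LinearMap.range_eq_top.2 (cover_surjective (syz M (i + 1)))), range_syzIncl]

/-- The minimal free resolution assembled from the chosen minimal covers. -/
noncomputable def minimalResolution (M : {M : ModuleCat.{u} R // Module.Finite R M}) :
    MinimalFreeResolution R M.1 where
  rank i := coverRank (syz M i)
  aug := cover M
  d i := syzIncl M i ∘ₗ cover (syz M (i + 1))
  aug_surjective := cover_surjective M
  exact_aug := (range_syzIncl_comp_cover M 0).symm
  exact i := by
    rw [range_syzIncl_comp_cover,
      LinearMap.ker_comp_of_ker_eq_bot _ (LinearMap.ker_eq_bot.2 (syzIncl_injective M i))]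
  minimal i := by
    rw [range_syzIncl_comp_cover]
    exact ker_cover_le _

lemma PD_syz (M : {M : ModuleCat.{u} R // Module.Finite R M}) (n i : ℕ) :
    PD R M.1 (n + i) ↔ PD R (syz M i).1 n := by
  induction i generalizing n with
  | zero => rfl
  | succ i ih =>
    rw [show n + (i + 1) = (n + 1) + i by omega, ih,
      PD_succ_iff_ker (cover (syz M i)) (cover_surjective _)]
    rfl

lemma projDimLE_of_PD (A : Type u) [AddCommGroup A] [Module R A] [hfin : Module.Finite R A] (n : ℕ)
    (h : PD R A n) : ProjDimLE R A n := by
  let M : {M : ModuleCat.{u} R // Module.Finite R M} := ⟨ModuleCat.of R A, hfin⟩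
  refine ⟨minimalResolution M, ?_⟩
  have h0 : PD R (syz M n).1 0 := (PD_syz M 0 n).1 (by rwa [zero_add])
  have hp : Module.Projective R (syz M n).1 := PD_zero_iff.1 h0
  have key : ∀ j, Subsingleton (syz M (n + 1 + j)).1 := by
    intro j
    induction j with
    | zero =>
      change Subsingleton (LinearMap.ker (cover (syz M n)))
      rw [ker_eq_bot_of_projective _ (cover_surjective _) (ker_cover_le (syz M n))]
      infer_instance
    | succ j ih =>
      have h0 := coverRank_eq_zero _ ih
      have : Subsingleton (Fin (coverRank (syz M (n + 1 + j))) → R) := by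
        rw [h0]; infer_instance
      change Subsingleton (LinearMap.ker (cover (syz M (n + 1 + j))))
      infer_instance
  intro i hi
  obtain ⟨j, rfl⟩ := Nat.exists_eq_add_of_le (show n + 1 ≤ i from hi)
  exact coverRank_eq_zero _ (key j)

end Syzygies

/-! ### Decomposable maximal ideal -/

section Decomposable

variable {R : Type u} [CommRing R]

/-- If `I ∩ J = 0` and `I + J = 𝔪`, then `𝔪 ≅ I × J`. -/
noncomputable def prodEquivSup {I J 𝔪 : Ideal R} (hinf : I ⊓ J = ⊥) (hsup : I ⊔ J = 𝔪) :
    (I × J) ≃ₗ[R] 𝔪 :=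
  LinearEquiv.ofBijective
    (LinearMap.coprod (Submodule.inclusion (hsup ▸ le_sup_left : I ≤ 𝔪))
      (Submodule.inclusion (hsup ▸ le_sup_right : J ≤ 𝔪)))
    (by
      constructor
      · rw [← LinearMap.ker_eq_bot, LinearMap.ker_eq_bot']
        rintro ⟨⟨a, ha⟩, ⟨b, hb⟩⟩ h
        have h' : a + b = 0 := congrArg Subtype.val h
        have hab : a = -b := eq_neg_of_add_eq_zero_left h'
        have ha0 : a = 0 := by
          have : a ∈ I ⊓ J := ⟨ha, hab ▸ J.neg_mem hb⟩
          rwa [hinf] at this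
        have hb0 : b = 0 := by simpa [ha0] using h'
        subst ha0 hb0
        rfl
      · rintro ⟨c, hc⟩
        rw [← hsup] at hc
        obtain ⟨a, ha, b, hb, rfl⟩ := Submodule.mem_sup.1 hc
        exact ⟨⟨⟨a, ha⟩, ⟨b, hb⟩⟩, rfl⟩)

lemma prodEquivSup_symm_of_mem_left {I J 𝔪 : Ideal R} (hinf : I ⊓ J = ⊥) (hsup : I ⊔ J = 𝔪)
    (a : R) (ha : a ∈ I) (ha' : a ∈ 𝔪) :
    (prodEquivSup hinf hsup).symm ⟨a, ha'⟩ = (⟨a, ha⟩, 0) := by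
  rw [LinearEquiv.symm_apply_eq]
  apply Subtype.ext
  change a = a + 0
  rw [add_zero]

variable [IsLocalRing R] {P : ModuleCat.{u} R → Prop}

/-- Let `𝔪 = I ⊕ J` and let `A ≠ 0` be killed by `I`. The kernel of a minimal cover `Rᵇ → A` lies
in `𝔪 Rᵇ` and contains `I Rᵇ`, so it has `I` as a direct summand. -/
lemma ideal_mem_of_killed (T : IsThickSubcat R P) (hR : P (ModuleCat.of R R)) {I J : Ideal R}
    (hinf : I ⊓ J = ⊥) (hsup : I ⊔ J = maximalIdeal R)
    (A : Type u) [AddCommGroup A] [Module R A] [Nontrivial A] (hA : P (ModuleCat.of R A))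
    (hkill : ∀ r ∈ I, ∀ a : A, r • a = 0) : P (ModuleCat.of R I) := by
  classical
  have hfin : Module.Finite R A := T.fg _ hA
  obtain ⟨k, π, hπ, hker⟩ := exists_minimal_cover (R := R) A
  have hk : 0 < k := by
    rcases Nat.eq_zero_or_pos k with rfl | h
    · have := hπ.subsingleton
      exact absurd ‹Nontrivial A› (not_nontrivial A)
    · exact h
  have hmem : ∀ v : LinearMap.ker π, v.1 ⟨0, hk⟩ ∈ maximalIdeal R :=
    fun v => apply_mem_of_mem_smul_top _ (hker v.2) _
  let ι : I →ₗ[R] LinearMap.ker π :=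
    LinearMap.codRestrict _ (LinearMap.single R (fun _ : Fin k => R) ⟨0, hk⟩ ∘ₗ I.subtype) (by
      intro r
      have : (Pi.single ⟨0, hk⟩ (r : R) : Fin k → R) = (r : R) • Pi.single ⟨0, hk⟩ (1 : R) := by
        rw [← Pi.single_smul, smul_eq_mul, mul_one]
      simp only [LinearMap.comp_apply, Submodule.subtype_apply, LinearMap.mem_ker,
        LinearMap.single_apply]
      rw [this, map_smul, hkill r.1 r.2])
  let q : LinearMap.ker π →ₗ[R] I :=
    LinearMap.fst R I J ∘ₗ (prodEquivSup hinf hsup).symm.toLinearMap ∘ₗ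
      LinearMap.codRestrict (maximalIdeal R)
        (LinearMap.proj (R := R) (φ := fun _ : Fin k => R) ⟨0, hk⟩ ∘ₗ (LinearMap.ker π).subtype) hmem
  refine T.summand ι q ?_ (T.ker π hπ (T.free hR k) hA)
  intro r
  have hr : r.1 ∈ maximalIdeal R := hsup ▸ (le_sup_left : I ≤ I ⊔ J) r.2
  have h2 : LinearMap.codRestrict (maximalIdeal R)
        (LinearMap.proj (R := R) (φ := fun _ : Fin k => R) ⟨0, hk⟩ ∘ₗ (LinearMap.ker π).subtype)
        hmem (ι r) = ⟨r.1, hr⟩ := by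
    apply Subtype.ext
    change (Pi.single ⟨0, hk⟩ (r : R) : Fin k → R) ⟨0, hk⟩ = r
    rw [Pi.single_eq_same]
  change ((prodEquivSup hinf hsup).symm _).1 = r
  rw [h2, prodEquivSup_symm_of_mem_left hinf hsup r.1 r.2 hr]

/-- Let `𝔪 = I ⊕ J` and let `L ⊆ 𝔪 Rᵏ = I Rᵏ ⊕ J Rᵏ` be the kernel of a map of free modules. Such a
map respects the decomposition, so `L ∩ I Rᵏ` is a direct summand of `L`; it is killed by `J`. -/
lemma ideal_mem_of_mem_syzygy (T : IsThickSubcat R P) (hR : P (ModuleCat.of R R)) {I J : Ideal R}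
    (hinf : I ⊓ J = ⊥) (hsup : I ⊔ J = maximalIdeal R) {k l : ℕ}
    (ψ : (Fin k → R) →ₗ[R] (Fin l → R))
    (hL : LinearMap.ker ψ ≤ maximalIdeal R • (⊤ : Submodule R (Fin k → R)))
    (hP : P (ModuleCat.of R (LinearMap.ker ψ))) (v : Fin k → R) (hv : v ∈ LinearMap.ker ψ)
    (e : R) (i : Fin k) (he : e ≠ 0)
    (hvi : ∃ h, e = ((prodEquivSup hinf hsup).symm ⟨v i, h⟩).1.1) : P (ModuleCat.of R J) := by
  have hmem : ∀ v : LinearMap.ker ψ, ∀ i, v.1 i ∈ maximalIdeal R :=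
    fun v i => apply_mem_of_mem_smul_top _ (hL v.2) _
  -- the componentwise projection `𝔪 Rᵏ → I Rᵏ`, restricted to `L`
  let q₀ : LinearMap.ker ψ →ₗ[R] (Fin k → R) := LinearMap.pi fun i =>
    I.subtype ∘ₗ LinearMap.fst R I J ∘ₗ (prodEquivSup hinf hsup).symm.toLinearMap ∘ₗ
      LinearMap.codRestrict (maximalIdeal R)
        (LinearMap.proj (R := R) (φ := fun _ : Fin k => R) i ∘ₗ (LinearMap.ker ψ).subtype)
        (fun v => hmem v i)
  have hq₀I : ∀ v i, q₀ v i ∈ I := fun v i => Subtype.property _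
  have hq₀J : ∀ v i, v.1 i - q₀ v i ∈ J := by
    intro v i
    have := congrArg Subtype.val
      ((prodEquivSup hinf hsup).apply_symm_apply ⟨v.1 i, hmem v i⟩)
    have h3 : q₀ v i + ((prodEquivSup hinf hsup).symm ⟨v.1 i, hmem v i⟩).2.1 = v.1 i := this
    rw [← h3, add_sub_cancel_left]
    exact Subtype.property _
  have hψ : ∀ (K : Ideal R) (w : Fin k → R), (∀ i, w i ∈ K) → ∀ j, ψ w j ∈ K := by
    intro K w hw j
    have : ψ w ∈ K • (⊤ : Submodule R (Fin l → R)) := by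
      have h1 := Submodule.mem_map_of_mem (f := ψ) (mem_smul_top_of_apply_mem K hw)
      rw [Submodule.map_smul''] at h1
      exact Submodule.smul_mono le_rfl le_top h1
    exact apply_mem_of_mem_smul_top K this j
  have hq₀ker : ∀ v, q₀ v ∈ LinearMap.ker ψ := by
    intro v
    rw [LinearMap.mem_ker]
    funext j
    have h1 : ψ (q₀ v) j ∈ I := hψ I _ (hq₀I v) j
    have h2 : ψ (v.1 - q₀ v) j ∈ J := hψ J _ (hq₀J v) j
    rw [map_sub, LinearMap.mem_ker.1 v.2, zero_sub, Pi.neg_apply, neg_mem_iff] at h2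
    have : ψ (q₀ v) j ∈ I ⊓ J := ⟨h1, h2⟩
    rwa [hinf] at this
  let A : Submodule R (Fin k → R) := LinearMap.ker ψ ⊓ Submodule.pi Set.univ fun _ => I
  let ι : A →ₗ[R] LinearMap.ker ψ := Submodule.inclusion inf_le_left
  let q : LinearMap.ker ψ →ₗ[R] A :=
    LinearMap.codRestrict A q₀ fun v => ⟨hq₀ker v, fun i _ => hq₀I v i⟩
  have hA : P (ModuleCat.of R A) := by
    refine T.summand ι q ?_ hP
    intro a
    apply Subtype.ext
    funext i
    have ha : a.1 i ∈ I := a.2.2 i trivial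
    exact congrArg (fun z => z.1.1)
      (prodEquivSup_symm_of_mem_left hinf hsup (a.1 i) ha (hmem (ι a) i))
  have hA0 : Nontrivial A := by
    refine nontrivial_of_ne (q ⟨v, hv⟩) 0 ?_
    intro h0
    obtain ⟨h, hvi⟩ := hvi
    exact he (hvi.trans (congrFun (congrArg Subtype.val h0) i))
  refine ideal_mem_of_killed T hR (inf_comm I J ▸ hinf) (sup_comm I J ▸ hsup) A hA ?_
  intro r hr a
  apply Subtype.ext
  funext i
  have : r * a.1 i ∈ I ⊓ J := ⟨I.mul_mem_left _ (a.2.2 i trivial), J.mul_mem_right _ hr⟩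
  rw [hinf] at this
  exact this

/-- If `𝔪 = I ⊕ J` with both summands nonzero, a thick subcategory containing `R` and a module
of projective dimension at least `2` contains the residue field. -/
theorem residue_mem_of_decomposable [IsNoetherianRing R] (T : IsThickSubcat R P)
    (hR : P (ModuleCat.of R R)) {I J : Ideal R}
    (hI : I ≠ ⊥) (hJ : J ≠ ⊥) (hinf : I ⊓ J = ⊥) (hsup : I ⊔ J = maximalIdeal R)
    (M : Type u) [AddCommGroup M] [Module R M] (hM : P (ModuleCat.of R M))
    (hpd : ¬ PD R M 1) : P (ModuleCat.of R (R ⧸ maximalIdeal R)) := by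
  have hfin : Module.Finite R M := T.fg _ hM
  obtain ⟨l, φ, hφ, -⟩ := exists_minimal_cover (R := R) M
  obtain ⟨k, π, hπ, hker⟩ := exists_minimal_cover (R := R) (LinearMap.ker φ)
  have hN := T.ker φ hφ (T.free hR l) hM
  have hL := T.ker π hπ (T.free hR k) hN
  let ψ : (Fin k → R) →ₗ[R] (Fin l → R) := (LinearMap.ker φ).subtype ∘ₗ π
  have hψ : LinearMap.ker ψ = LinearMap.ker π :=
    LinearMap.ker_comp_of_ker_eq_bot _ (Submodule.ker_subtype _)
  have hne : LinearMap.ker π ≠ ⊥ := by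
    intro h0
    apply hpd
    rw [← zero_add 1, PD_succ_iff_ker φ hφ, PD_zero_iff]
    exact Module.Projective.of_equiv
      (LinearEquiv.ofBijective π ⟨LinearMap.ker_eq_bot.1 h0, hπ⟩)
  rw [← hψ] at hL hne hker
  obtain ⟨v, hv, hv0⟩ := (Submodule.ne_bot_iff _).1 hne
  obtain ⟨i, hi⟩ := Function.ne_iff.1 hv0
  have hvm : v i ∈ maximalIdeal R := apply_mem_of_mem_smul_top _ (hker hv) i
  have hinf' : J ⊓ I = ⊥ := inf_comm I J ▸ hinf
  have hsup' : J ⊔ I = maximalIdeal R := sup_comm I J ▸ hsup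
  have kill : ∀ (K K' : Ideal R), K ⊓ K' = ⊥ → ∀ r ∈ K, ∀ a : K', r • a = 0 := by
    intro K K' h r hr a
    apply Subtype.ext
    have : r * a.1 ∈ K ⊓ K' := ⟨K.mul_mem_right _ hr, K'.mul_mem_left _ a.2⟩
    rw [h] at this
    exact this
  have := Submodule.nontrivial_iff_ne_bot.2 hI
  have := Submodule.nontrivial_iff_ne_bot.2 hJ
  have both : P (ModuleCat.of R I) ∧ P (ModuleCat.of R J) := by
    by_cases h1 : ((prodEquivSup hinf hsup).symm ⟨v i, hvm⟩).1.1 = 0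
    · by_cases h2 : ((prodEquivSup hinf' hsup').symm ⟨v i, hvm⟩).1.1 = 0
      · exfalso
        apply hi
        -- both components of `v i` vanish
        have hsw : (prodEquivSup hinf' hsup').symm ⟨v i, hvm⟩ =
            ((prodEquivSup hinf hsup).symm ⟨v i, hvm⟩).swap := by
          rw [LinearEquiv.symm_apply_eq]
          conv_lhs => rw [← (prodEquivSup hinf hsup).apply_symm_apply ⟨v i, hvm⟩]
          apply Subtype.ext
          exact add_comm _ _
        rw [hsw] at h2
        have h3 := congrArg Subtype.val
          ((prodEquivSup hinf hsup).apply_symm_apply ⟨v i, hvm⟩)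
        have h4 : ((prodEquivSup hinf hsup).symm ⟨v i, hvm⟩).1.1 +
          ((prodEquivSup hinf hsup).symm ⟨v i, hvm⟩).2.1 = v i := h3
        rw [h1, zero_add] at h4
        rw [← h4]
        exact h2
      · have hPI : P (ModuleCat.of R I) := ideal_mem_of_mem_syzygy T hR hinf' hsup' ψ hker hL v hv
          _ i h2 ⟨hvm, rfl⟩
        exact ⟨hPI, ideal_mem_of_killed T hR hinf' hsup' I hPI (kill J I hinf')⟩
    · have hPJ : P (ModuleCat.of R J) := ideal_mem_of_mem_syzygy T hR hinf hsup ψ hker hL v hv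
        _ i h1 ⟨hvm, rfl⟩
      exact ⟨ideal_mem_of_killed T hR hinf hsup J hPJ (kill I J hinf), hPJ⟩
  exact T.quotient (maximalIdeal R) hR (T.congr (prodEquivSup hinf hsup) (T.prod both.1 both.2))

end Decomposable

/-! ### Reduction modulo a regular element -/

section ChangeOfRings

variable {R : Type u} [CommRing R]

lemma quotSMulTop_map_injective {A B C : Type u} [AddCommGroup A] [Module R A]
    [AddCommGroup B] [Module R B] [AddCommGroup C] [Module R C] (x : R)
    (f : A →ₗ[R] B) (g : B →ₗ[R] C) (hf : Function.Injective f) (h : Function.Exact f g)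
    (hC : IsSMulRegular C x) : Function.Injective (QuotSMulTop.map x f) := by
  have h0 : Function.Exact (0 : PUnit.{u + 1} →ₗ[R] A) f :=
    LinearMap.exact_zero_iff_injective _ _ |>.2 hf
  have := QuotSMulTop.map_first_exact_on_four_term_exact_of_isSMulRegular_last h0 h hC
  rw [map_zero] at this
  exact (LinearMap.exact_zero_iff_injective _ _).1 this

/-- Projective dimension does not go up when lifting along reduction modulo an element regular
on both the ring and the module. -/
lemma PD_of_quotSMulTop [IsLocalRing R] [IsNoetherianRing R] {x : R} (hx : x ∈ maximalIdeal R)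
    (hxR : IsSMulRegular R x) (n : ℕ) (N : Type u) [AddCommGroup N] [Module R N]
    [Module.Finite R N] (hxN : IsSMulRegular N x)
    (h : PD (R ⧸ Ideal.span {x}) (QuotSMulTop x N) n) : PD R N n := by
  have hnt : Nontrivial (R ⧸ Ideal.span {x}) := Ideal.Quotient.nontrivial_iff.2 (by
    rw [Ne, Ideal.span_singleton_eq_top]; exact hx)
  have hloc : IsLocalRing (R ⧸ Ideal.span {x}) :=
    .of_surjective' (Ideal.Quotient.mk _) Ideal.Quotient.mk_surjective
  induction n generalizing N with
  | zero =>
    rw [PD_zero_iff] at h ⊢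
    have := Module.Finite.of_restrictScalars_finite R (R ⧸ Ideal.span {x}) (QuotSMulTop x N)
    have hfree : Module.Free (R ⧸ Ideal.span {x}) (QuotSMulTop x N) :=
      Module.free_of_flat_of_isLocalRing
    have := Module.finitePresentation_of_finite R N
    have := (Module.free_quotSMulTop_iff_free R N (IsLocalRing.maximalIdeal_le_jacobson ⊥ hx)
      hxN).1 hfree
    infer_instance
  | succ n ih =>
    obtain ⟨k, π, hπ, -⟩ := exists_minimal_cover (R := R) N
    rw [PD_succ_iff_ker π hπ]
    have hxF : IsSMulRegular (Fin k → R) x := IsSMulRegular.pi fun _ => hxR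
    have hxK : IsSMulRegular (LinearMap.ker π) x :=
      hxF.of_injective (LinearMap.ker π).subtype (Submodule.injective_subtype _)
    refine ih (LinearMap.ker π) hxK ?_
    have hex := LinearMap.exact_subtype_ker_map π
    have hproj : Module.Projective (R ⧸ Ideal.span {x}) (QuotSMulTop x (Fin k → R)) :=
      have : Module.Free (R ⧸ Ideal.span {x}) (QuotSMulTop x (Fin k → R)) := inferInstance
      inferInstance
    refine (PD_succ_iff
      ((QuotSMulTop.map x (LinearMap.ker π).subtype).extendScalarsOfSurjective
        Ideal.Quotient.mk_surjective)
      ((QuotSMulTop.map x π).extendScalarsOfSurjective Ideal.Quotient.mk_surjective)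
      ?_ ?_ ?_ n).1 h
    · exact quotSMulTop_map_injective x _ π (Submodule.injective_subtype _) hex hxN
    · exact QuotSMulTop.map_surjective x hπ
    · exact QuotSMulTop.map_exact x hex hπ

/-- The modules over `R ⧸ I` which lie in `P` when viewed over `R`. -/
def restrictedSubcat (I : Ideal R) (P : ModuleCat.{u} R → Prop) : ModuleCat.{u} (R ⧸ I) → Prop :=
  fun A => P ((ModuleCat.restrictScalars (Ideal.Quotient.mk I)).obj A)

lemma restrictedSubcat_of_mem {I : Ideal R} {P : ModuleCat.{u} R → Prop} (T : IsThickSubcat R P)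
    (A : Type u) [AddCommGroup A] [Module R A] [Module (R ⧸ I) A] [IsScalarTower R (R ⧸ I) A]
    (hA : P (ModuleCat.of R A)) : restrictedSubcat I P (ModuleCat.of (R ⧸ I) A) := by
  refine T.iso_closed _ _ ⟨?_⟩ hA
  exact
    { toFun := fun a => a
      invFun := fun a => a
      map_add' := fun _ _ => rfl
      map_smul' := fun r a => (algebraMap_smul (R ⧸ I) r a).symm
      left_inv := fun _ => rfl
      right_inv := fun _ => rfl }

/-- Restriction of scalars along a surjection, on linear maps. -/
def restrictedMap (I : Ideal R) {A B : ModuleCat.{u} (R ⧸ I)} (f : A →ₗ[R ⧸ I] B) :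
    (ModuleCat.restrictScalars (Ideal.Quotient.mk I)).obj A →ₗ[R]
      (ModuleCat.restrictScalars (Ideal.Quotient.mk I)).obj B where
  toFun := f
  map_add' := f.map_add
  map_smul' r a := f.map_smul (Ideal.Quotient.mk I r) a

lemma IsThickSubcat.restricted {P : ModuleCat.{u} R → Prop} (T : IsThickSubcat R P)
    (I : Ideal R) : IsThickSubcat (R ⧸ I) (restrictedSubcat I P) where
  fg A hA := by
    let _ : Module R A := Module.compHom A (Ideal.Quotient.mk I)
    have : IsScalarTower R (R ⧸ I) A := ⟨fun r s a => mul_smul (Ideal.Quotient.mk I r) s a⟩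
    have : Module.Finite R A := T.fg _ hA
    exact Module.Finite.of_restrictScalars_finite R (R ⧸ I) A
  iso_closed A B h hA := by
    obtain ⟨e⟩ := h
    exact T.iso_closed _ _ ⟨LinearEquiv.ofBijective (restrictedMap I e.toLinearMap) e.bijective⟩ hA
  summand_closed A B h hA := by
    obtain ⟨ι, π, h⟩ := h
    exact T.summand_closed _ _ ⟨restrictedMap I ι, restrictedMap I π,
      LinearMap.ext fun b => LinearMap.congr_fun h b⟩ hA
  two_of_three A B C f g hf hg h := by
    refine T.two_of_three _ _ _ (restrictedMap I f) (restrictedMap I g) hf hg ?_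
    ext b
    exact (SetLike.ext_iff.1 h b :)

end ChangeOfRings

/-! ### The residue field lies in the thick subcategory -/

section RegularSequence

lemma mem_quotSMulTop {R : Type u} [CommRing R] {P : ModuleCat.{u} R → Prop}
    (T : IsThickSubcat R P) {x : R} {N : Type u} [AddCommGroup N] [Module R N]
    (hx : IsSMulRegular N x) (hN : P (ModuleCat.of R N)) :
    P (ModuleCat.of R (QuotSMulTop x N)) := by
  refine T.right (LinearMap.lsmul R N x) (Submodule.mkQ _) hx (Submodule.mkQ_surjective _) ?_
    hN hN
  intro n
  rw [Submodule.mkQ_apply, Submodule.Quotient.mk_eq_zero]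
  exact ⟨fun ⟨a, _, ha⟩ => ⟨a, ha⟩, fun ⟨a, ha⟩ => ⟨a, trivial, ha⟩⟩

/-- If `I / (xs)` and `J / (xs)` are nonzero and decompose `𝔪 / (xs)`, a thick subcategory
containing `R` and a module of projective dimension at least `length xs + 2` contains the
residue field. Killing the first element of the sequence costs one syzygy, since that element
is regular on any first syzygy module. -/
theorem residue_mem_of_quasi_decomposable (n : ℕ) : ∀ (R : Type u) [CommRing R]
    [IsLocalRing R] [IsNoetherianRing R] {P : ModuleCat.{u} R → Prop} (_ : IsThickSubcat R P)
    (_ : P (ModuleCat.of R R)) (xs : List R) (_ : xs.length = n)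
    (_ : ∀ a ∈ xs, a ∈ maximalIdeal R)
    (_ : RingTheory.Sequence.IsWeaklyRegular R xs) (I J : Ideal R)
    (_ : I ≠ Ideal.ofList xs) (_ : J ≠ Ideal.ofList xs) (_ : I ⊓ J = Ideal.ofList xs)
    (_ : I ⊔ J = maximalIdeal R)
    (M : Type u) [AddCommGroup M] [Module R M] (_ : P (ModuleCat.of R M))
    (_ : ¬ PD R M (n + 1)), P (ModuleCat.of R (R ⧸ maximalIdeal R)) := by
  induction n with
  | zero =>
    intro R _ _ _ P T hR xs hlen hm hreg I J hI hJ hinf hsup M _ _ hM hpd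
    obtain rfl := List.length_eq_zero_iff.1 hlen
    rw [Ideal.ofList_nil] at hI hJ hinf
    exact residue_mem_of_decomposable T hR hI hJ hinf hsup M hM hpd
  | succ n ih =>
    intro R _ _ _ P T hR xs hlen hm hreg I J hI hJ hinf hsup M _ _ hM hpd
    obtain _ | ⟨x, xs⟩ := xs
    · simp at hlen
    have hx : x ∈ maximalIdeal R := hm x (by simp)
    rw [RingTheory.Sequence.isWeaklyRegular_cons_iff'] at hreg
    obtain ⟨hxR, hreg⟩ := hreg
    have hfin : Module.Finite R M := T.fg _ hM
    obtain ⟨k, π, hπ, -⟩ := exists_minimal_cover (R := R) M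
    have hK := T.ker π hπ (T.free hR k) hM
    have hxF : IsSMulRegular (Fin k → R) x := IsSMulRegular.pi fun _ => hxR
    have hxK : IsSMulRegular (LinearMap.ker π) x :=
      hxF.of_injective (LinearMap.ker π).subtype (Submodule.injective_subtype _)
    have hnt : Nontrivial (R ⧸ Ideal.span {x}) := Ideal.Quotient.nontrivial_iff.2 (by
      rw [Ne, Ideal.span_singleton_eq_top]; exact hx)
    have hloc : IsLocalRing (R ⧸ Ideal.span {x}) :=
      .of_surjective' (Ideal.Quotient.mk _) Ideal.Quotient.mk_surjective
    have hcomap : (maximalIdeal (R ⧸ Ideal.span {x})).comap (Ideal.Quotient.mk _) =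
        maximalIdeal R :=
      IsLocalRing.eq_maximalIdeal
        (Ideal.comap_isMaximal_of_surjective _ Ideal.Quotient.mk_surjective)
    have hcm : ∀ K : Ideal R, Ideal.span {x} ≤ K →
        (K.map (Ideal.Quotient.mk (Ideal.span {x}))).comap (Ideal.Quotient.mk _) = K := by
      intro K hK
      rw [Ideal.comap_map_of_surjective' _ Ideal.Quotient.mk_surjective, Ideal.mk_ker,
        sup_eq_left.2 hK]
    have hinj : Function.Injective (Ideal.comap (Ideal.Quotient.mk (Ideal.span {x}))) :=
      Ideal.comap_injective_of_surjective _ Ideal.Quotient.mk_surjective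
    have hxo : Ideal.span {x} ≤ Ideal.ofList (x :: xs) := by
      rw [Ideal.ofList_cons]; exact le_sup_left
    have hxI : Ideal.span {x} ≤ I := hxo.trans (hinf ▸ inf_le_left)
    have hxJ : Ideal.span {x} ≤ J := hxo.trans (hinf ▸ inf_le_right)
    have hof : (Ideal.ofList (xs.map (Ideal.Quotient.mk (Ideal.span {x})))).comap
        (Ideal.Quotient.mk _) = Ideal.ofList (x :: xs) := by
      rw [← Ideal.map_ofList, Ideal.comap_map_of_surjective' _ Ideal.Quotient.mk_surjective,
        Ideal.mk_ker, Ideal.ofList_cons, sup_comm]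
    have key := ih (R ⧸ Ideal.span {x}) (T.restricted (Ideal.span {x})) ?_
      (xs.map (Ideal.Quotient.mk _)) (by simpa using hlen) ?_ ?_
      (I.map (Ideal.Quotient.mk _)) (J.map (Ideal.Quotient.mk _)) ?_ ?_ ?_ ?_
      (QuotSMulTop x (LinearMap.ker π))
      (restrictedSubcat_of_mem T _ (mem_quotSMulTop T hxK hK)) ?_
    · let f : R →ₗ[R] (ModuleCat.restrictScalars (Ideal.Quotient.mk (Ideal.span {x}))).obj
          (ModuleCat.of _ ((R ⧸ Ideal.span {x}) ⧸ maximalIdeal (R ⧸ Ideal.span {x}))) :=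
        { toFun := fun r => Ideal.Quotient.mk _ (Ideal.Quotient.mk (Ideal.span {x}) r)
          map_add' := fun _ _ => rfl
          map_smul' := fun _ _ => rfl }
      have hf : Function.Surjective f :=
        Ideal.Quotient.mk_surjective.comp Ideal.Quotient.mk_surjective
      have hkf : LinearMap.ker f = maximalIdeal R := by
        rw [← hcomap]
        ext r
        exact Ideal.Quotient.eq_zero_iff_mem
      refine T.iso_closed _ _ ⟨?_⟩ key
      exact ((Submodule.quotEquivOfEq _ _ hkf).symm ≪≫ₗ f.quotKerEquivOfSurjective hf).symm
    · have h1 := mem_quotSMulTop T hxR hR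
      have e : QuotSMulTop x R ≃ₗ[R] (R ⧸ Ideal.span {x}) :=
        Submodule.quotEquivOfEq _ _ (by
          rw [← Submodule.ideal_span_singleton_smul]; simp)
      exact restrictedSubcat_of_mem T _ (T.congr e h1)
    · intro a ha
      obtain ⟨b, hb, rfl⟩ := List.mem_map.1 ha
      have : b ∈ (maximalIdeal (R ⧸ Ideal.span {x})).comap (Ideal.Quotient.mk _) := by
        rw [hcomap]; exact hm b (by simp [hb])
      exact this
    · have e : QuotSMulTop x R ≃ₗ[R] (R ⧸ Ideal.span {x}) :=
        Submodule.quotEquivOfEq _ _ (by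
          rw [← Submodule.ideal_span_singleton_smul]; simp)
      exact (LinearEquiv.isWeaklyRegular_congr
        (e.extendScalarsOfSurjective Ideal.Quotient.mk_surjective) _).1 hreg
    · intro h0
      apply hI
      rw [← hof, ← h0, hcm I hxI]
    · intro h0
      apply hJ
      rw [← hof, ← h0, hcm J hxJ]
    · apply hinj
      rw [hof, Ideal.comap_inf, hcm I hxI, hcm J hxJ, hinf]
    · rw [← Ideal.map_sup, hsup, ← hcomap,
        Ideal.map_comap_of_surjective _ Ideal.Quotient.mk_surjective]
    · intro h0
      apply hpd
      rw [PD_succ_iff_ker π hπ]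
      exact PD_of_quotSMulTop hx hxR _ _ hxK h0

/-- The residue field criterion, in terms of a decomposition of the module `𝔪 / (xs)`. -/
theorem residue_mem_of_isDecomposableModule (R : Type u) [CommRing R] [IsLocalRing R]
    [IsNoetherianRing R] {P : ModuleCat.{u} R → Prop} (T : IsThickSubcat R P)
    (hR : P (ModuleCat.of R R)) (xs : List R) (hm : ∀ a ∈ xs, a ∈ maximalIdeal R)
    (hreg : RingTheory.Sequence.IsWeaklyRegular R xs)
    (hdec : IsDecomposableModule (R ⧸ Ideal.ofList xs)
      (↥((maximalIdeal R).map (Ideal.Quotient.mk (Ideal.ofList xs)))))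
    (M : Type u) [AddCommGroup M] [Module R M] (hM : P (ModuleCat.of R M))
    (hpd : ¬ PD R M (xs.length + 1)) : P (ModuleCat.of R (R ⧸ maximalIdeal R)) := by
  obtain ⟨N₁, N₂, h1, h2, hinf, hsup⟩ := hdec
  let φ : R →+* R ⧸ Ideal.ofList xs := Ideal.Quotient.mk (Ideal.ofList xs)
  have hφ : Function.Surjective φ := Ideal.Quotient.mk_surjective
  have hle : Ideal.ofList xs ≤ maximalIdeal R := Ideal.span_le.2 hm
  have hbot : (⊥ : Ideal (R ⧸ Ideal.ofList xs)).comap φ = Ideal.ofList xs := Ideal.mk_ker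
  have hinj : Function.Injective (Ideal.comap φ) := Ideal.comap_injective_of_surjective _ hφ
  have hmap : ∀ N : Submodule (R ⧸ Ideal.ofList xs) ((maximalIdeal R).map φ), N ≠ ⊥ →
      Ideal.comap φ (N.map ((maximalIdeal R).map φ).subtype) ≠ Ideal.ofList xs := by
    intro N hN h0
    exact hN (Submodule.map_injective_of_injective (Submodule.injective_subtype _)
      ((hinj (h0.trans hbot.symm)).trans (Submodule.map_bot _).symm))
  have hcs : ∀ K L : Ideal (R ⧸ Ideal.ofList xs),
      K.comap φ ⊔ L.comap φ = (K ⊔ L).comap φ := by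
    intro K L
    rw [← Ideal.map_sup_comap_of_surjective φ hφ K L, Ideal.comap_map_of_surjective' _ hφ,
      eq_comm, sup_eq_left]
    exact le_sup_of_le_left (Ideal.comap_mono bot_le)
  refine residue_mem_of_quasi_decomposable xs.length R T hR xs rfl hm hreg
    (Ideal.comap φ (N₁.map ((maximalIdeal R).map φ).subtype))
    (Ideal.comap φ (N₂.map ((maximalIdeal R).map φ).subtype))
    (hmap _ h1) (hmap _ h2) ?_ ?_ M hM hpd
  · rw [← Ideal.comap_inf, ← Submodule.map_inf _ (Submodule.injective_subtype _), hinf,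
      Submodule.map_bot, hbot]
  · rw [hcs, ← Submodule.map_sup, hsup, Submodule.map_top,
      Submodule.range_subtype, Ideal.comap_map_of_surjective' _ hφ, Ideal.mk_ker,
      sup_eq_left.2 hle]

end RegularSequence

/-! ### Regular local rings -/

section RegularLocal

/-- A local ring of dimension at least `n` whose maximal ideal has `n` generators is a domain,
and its maximal ideal is generated by a regular sequence. The inductive step kills an element
`y ∈ 𝔪` outside `𝔪²` and all minimal primes. -/
theorem exists_isWeaklyRegular_of_regular (n : ℕ) : ∀ (R : Type u) [CommRing R] [IsLocalRing R]
    [IsNoetherianRing R] (x : Fin n → R) (_ : Ideal.span (Set.range x) = maximalIdeal R)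
    (_ : (n : WithBot ℕ∞) ≤ ringKrullDim R),
    IsDomain R ∧ ∃ rs : List R, RingTheory.Sequence.IsWeaklyRegular R rs ∧
      Ideal.ofList rs = maximalIdeal R := by
  induction n with
  | zero =>
    intro R _ _ _ x hx _
    have h0 : maximalIdeal R = ⊥ := by rw [← hx, Set.range_eq_empty, Ideal.span_empty]
    refine ⟨?_, [], .nil _ _, by rw [h0, Ideal.ofList_nil]⟩
    let := (IsLocalRing.isField_iff_maximalIdeal_eq.2 h0).toField
    infer_instance
  | succ n ih =>
    intro R _ _ _ x hx hdim
    have hd0 : ringKrullDim R ≠ 0 := by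
      intro h
      rw [h] at hdim
      exact absurd (by exact_mod_cast hdim : n + 1 ≤ 0) (by omega)
    obtain ⟨y, hym, hy2, hyp⟩ : ∃ y ∈ maximalIdeal R, y ∉ maximalIdeal R ^ 2 ∧
        ∀ p ∈ minimalPrimes R, y ∉ p := by
      by_contra! hcon
      have hfin : (insert (maximalIdeal R ^ 2) (minimalPrimes R)).Finite :=
        (Ideal.finite_minimalPrimes_of_isNoetherianRing R ⊥).insert _
      have hsub : (maximalIdeal R : Set R) ⊆
          ⋃ i ∈ insert (maximalIdeal R ^ 2) (minimalPrimes R), (id i : Ideal R) := by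
        intro y hy
        rw [Set.mem_iUnion₂]
        by_cases h2 : y ∈ maximalIdeal R ^ 2
        · exact ⟨_, Set.mem_insert _ _, h2⟩
        · obtain ⟨p, hp, hyp⟩ := hcon y hy h2
          exact ⟨p, Set.mem_insert_of_mem _ hp, hyp⟩
      obtain ⟨p, hp, hle⟩ := (Ideal.subset_union_prime_finite hfin (maximalIdeal R ^ 2)
        (maximalIdeal R ^ 2) (fun i hi hne _ =>
          (hi.resolve_left hne).1.1)).1 hsub
      obtain rfl | hp := hp
      · exact (maximalIdeal_sq_lt_of_ringKrullDim_ne_zero hd0).not_ge hle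
      · have : p.IsPrime := hp.1.1
        have hpe : p = maximalIdeal R := le_antisymm (le_maximalIdeal this.ne_top) hle
        rw [hpe] at hp
        apply hd0
        rw [← IsLocalRing.maximalIdeal_height_eq_ringKrullDim,
          Ideal.height_eq_zero_iff.2 hp]
        rfl
    have hnt : Nontrivial (R ⧸ Ideal.span {y}) := Ideal.Quotient.nontrivial_iff.2 (by
      rw [Ne, Ideal.span_singleton_eq_top]; exact hym)
    have hloc : IsLocalRing (R ⧸ Ideal.span {y}) :=
      .of_surjective' (Ideal.Quotient.mk _) Ideal.Quotient.mk_surjective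
    have hcomap : (maximalIdeal (R ⧸ Ideal.span {y})).comap (Ideal.Quotient.mk _) =
        maximalIdeal R :=
      IsLocalRing.eq_maximalIdeal
        (Ideal.comap_isMaximal_of_surjective _ Ideal.Quotient.mk_surjective)
    have hmap : (maximalIdeal R).map (Ideal.Quotient.mk (Ideal.span {y})) =
        maximalIdeal (R ⧸ Ideal.span {y}) := by
      rw [← hcomap, Ideal.map_comap_of_surjective _ Ideal.Quotient.mk_surjective]
    -- some coefficient of `y` in terms of the generators `x` is a unit
    obtain ⟨a, ha⟩ := (Ideal.mem_span_range_iff_exists_fun).1 (hx ▸ hym)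
    obtain ⟨i, hi⟩ : ∃ i, IsUnit (a i) := by
      by_contra! hcon
      apply hy2
      rw [← ha, pow_two]
      refine Ideal.sum_mem _ fun j _ => Ideal.mul_mem_mul (hcon j) ?_
      rw [← hx]; exact Ideal.subset_span ⟨j, rfl⟩
    have hgen : Ideal.span (Set.range fun j => Ideal.Quotient.mk (Ideal.span {y})
        (x (i.succAbove j))) = maximalIdeal (R ⧸ Ideal.span {y}) := by
      rw [← hmap, ← hx, Ideal.map_span]
      apply le_antisymm
      · refine Ideal.span_mono ?_
        rintro _ ⟨j, rfl⟩
        exact ⟨_, ⟨_, rfl⟩, rfl⟩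
      · rw [Ideal.span_le]
        rintro _ ⟨_, ⟨j, rfl⟩, rfl⟩
        obtain rfl | ⟨j, rfl⟩ := Fin.eq_self_or_eq_succAbove i j
        · have h1 : Ideal.Quotient.mk (Ideal.span {y}) y = 0 :=
            Ideal.Quotient.eq_zero_iff_mem.2 (Ideal.mem_span_singleton_self y)
          rw [← congrArg (Ideal.Quotient.mk (Ideal.span {y})) ha, map_sum,
            Fin.sum_univ_succAbove _ j, add_eq_zero_iff_eq_neg, map_mul] at h1
          rw [SetLike.mem_coe, ← Ideal.unit_mul_mem_iff_mem _ (hi.map (Ideal.Quotient.mk _)), h1,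
            neg_mem_iff]
          refine Ideal.sum_mem _ fun l _ => ?_
          rw [map_mul]
          exact Ideal.mul_mem_left _ _ (Ideal.subset_span ⟨l, rfl⟩)
        · exact Ideal.subset_span ⟨j, rfl⟩
    have hdim' : (n : WithBot ℕ∞) ≤ ringKrullDim (R ⧸ Ideal.span {y}) := by
      have h1 := ringKrullDim_le_ringKrullDim_quotient_add_card {y} (by
        simpa [IsLocalRing.ringJacobson_eq_maximalIdeal] using hym)
      rw [Finset.coe_singleton, Finset.card_singleton] at h1
      have h2 := hdim.trans h1
      push_cast at h2
      exact ENat.WithBot.add_le_add_one_right_iff.1 h2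
    obtain ⟨hdom, rs', hreg, hof⟩ := ih (R ⧸ Ideal.span {y}) _ hgen hdim'
    have hprime : (Ideal.span {y}).IsPrime := Ideal.Quotient.isDomain_iff_prime _ |>.1 hdom
    obtain ⟨Q, hQ, hQle⟩ := Ideal.exists_minimalPrimes_le (bot_le : ⊥ ≤ Ideal.span {y})
    have hQp : Q.IsPrime := hQ.1.1
    have hQbot : Q = ⊥ := by
      refine Submodule.eq_bot_of_le_smul_of_le_jacobson_bot (maximalIdeal R) Q
        (IsNoetherian.noetherian Q) ?_ (IsLocalRing.maximalIdeal_le_jacobson ⊥)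
      intro q hq
      obtain ⟨r, rfl⟩ := Ideal.mem_span_singleton'.1 (hQle hq)
      rw [mul_comm]
      exact Submodule.smul_mem_smul hym ((hQp.mem_or_mem hq).resolve_right (hyp Q hQ))
    rw [hQbot] at hQp
    have hR : IsDomain R := IsDomain.of_bot_isPrime R
    refine ⟨hR, ?_⟩
    obtain ⟨rs, rfl⟩ := List.map_surjective_iff.2
      (Ideal.Quotient.mk_surjective (I := Ideal.span {y})) rs'
    have hy0 : y ≠ 0 := fun h => hy2 (h ▸ Ideal.zero_mem _)
    refine ⟨y :: rs, ?_, ?_⟩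
    · rw [RingTheory.Sequence.isWeaklyRegular_cons_iff']
      refine ⟨fun a b h => mul_left_cancel₀ hy0 h, ?_⟩
      have e : QuotSMulTop y R ≃ₗ[R] (R ⧸ Ideal.span {y}) :=
        Submodule.quotEquivOfEq _ _ (by
          rw [← Submodule.ideal_span_singleton_smul]; simp)
      exact (LinearEquiv.isWeaklyRegular_congr
        (e.extendScalarsOfSurjective Ideal.Quotient.mk_surjective) _).2 hreg
    · rw [← hcomap, ← hof, ← Ideal.map_ofList,
        Ideal.comap_map_of_surjective' _ Ideal.Quotient.mk_surjective,
        Ideal.mk_ker, Ideal.ofList_cons, sup_comm]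

/-- The residue field of a regular local ring has finite projective dimension. -/
theorem IsRegularLocal.exists_PD {A : Type u} [CommRing A] [IsLocalRing A]
    (h : IsRegularLocal A) : ∃ n, PD A (A ⧸ maximalIdeal A) n := by
  obtain ⟨hn, _, s, hs, hcard⟩ := h
  obtain ⟨-, rs, hreg, hof⟩ := exists_isWeaklyRegular_of_regular s.card A
    (fun i => (s.equivFin.symm i : A)) (by
      rw [← hs]
      congr 1
      ext a
      constructor
      · rintro ⟨i, rfl⟩; exact (s.equivFin.symm i).2
      · intro ha; exact ⟨s.equivFin ⟨a, ha⟩, by simp⟩) hcard.le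
  have hmem : ∀ r ∈ rs, r ∈ maximalIdeal A := by
    intro r hr
    rw [← hof]; exact Ideal.subset_span hr
  have key := ModuleCat.projectiveDimension_quotient_eq_add_length_of_isWeaklyRegular
    (ModuleCat.of A A) rs hreg hmem
  refine ⟨rs.length, ?_⟩
  have hp : Projective (ModuleCat.of A A) :=
    (IsProjective.iff_projective (R := A) (P := A)).1 inferInstance
  rw [ModuleCat.projectiveDimension_eq_zero_of_projective (ModuleCat.of A A), zero_add] at key
  have h1 := (projectiveDimension_le_iff _ _).1 key.le
  have e : (A ⧸ Ideal.ofList rs • (⊤ : Submodule A A)) ≃ₗ[A] A ⧸ maximalIdeal A :=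
    Submodule.quotEquivOfEq _ _ (by rw [hof]; simp)
  exact hasProjectiveDimensionLT_of_iso e.toModuleIso _

end RegularLocal

/-! ### Pulling back multiplication by a scalar along a cover -/

section Pullback

variable {R : Type u} [CommRing R]

/-- The pullback of `π : F → M` and multiplication by `x` on `M`. For a projective cover `π`
it is an extension of `M` by the first syzygy of `M`, split as soon as `x` annihilates
`Ext¹(M, ker π)`. -/
def mulPullback {F M : Type u} [AddCommGroup F] [Module R F] [AddCommGroup M] [Module R M]
    (π : F →ₗ[R] M) (x : R) : Submodule R (F × M) :=
  LinearMap.ker (π ∘ₗ LinearMap.fst R F M - x • LinearMap.snd R F M)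

lemma mem_mulPullback {F M : Type u} [AddCommGroup F] [Module R F] [AddCommGroup M] [Module R M]
    {π : F →ₗ[R] M} {x : R} {z : F × M} : z ∈ mulPullback π x ↔ π z.1 = x • z.2 := by
  rw [mulPullback, LinearMap.mem_ker, LinearMap.sub_apply, sub_eq_zero]
  rfl

variable {P : ModuleCat.{u} R → Prop} {F M : Type u} [AddCommGroup F] [Module R F]
  [AddCommGroup M] [Module R M]

/-- When `x` is regular on `M`, the pullback is the kernel of `F → M → M / xM`. -/
lemma mulPullback_mem (T : IsThickSubcat R P) (π : F →ₗ[R] M) (hπ : Function.Surjective π)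
    {x : R} (hx : IsSMulRegular M x) (hF : P (ModuleCat.of R F))
    (hM : P (ModuleCat.of R (QuotSMulTop x M))) : P (ModuleCat.of R (mulPullback π x)) := by
  let q : F →ₗ[R] QuotSMulTop x M := Submodule.mkQ _ ∘ₗ π
  have hq : Function.Surjective q := (Submodule.mkQ_surjective _).comp hπ
  have hmem : ∀ f, f ∈ LinearMap.ker q ↔ ∃ m, x • m = π f := by
    intro f
    rw [LinearMap.mem_ker, LinearMap.comp_apply, Submodule.mkQ_apply,
      Submodule.Quotient.mk_eq_zero]
    exact ⟨fun ⟨a, _, ha⟩ => ⟨a, ha⟩, fun ⟨a, ha⟩ => ⟨a, trivial, ha⟩⟩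
  let e : mulPullback π x →ₗ[R] LinearMap.ker q :=
    LinearMap.codRestrict _ (LinearMap.fst R F M ∘ₗ (mulPullback π x).subtype)
      fun z => (hmem _).2 ⟨z.1.2, (mem_mulPullback.1 z.2).symm⟩
  have he : Function.Bijective e := by
    constructor
    · rintro ⟨⟨f, m⟩, hz⟩ ⟨⟨f', m'⟩, hz'⟩ h
      have hff : f = f' := congrArg Subtype.val h
      subst hff
      have : x • m = x • m' := (mem_mulPullback.1 hz).symm.trans (mem_mulPullback.1 hz')
      have hmm : m = m' := hx this
      subst hmm
      rfl
    · rintro ⟨f, hf⟩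
      obtain ⟨m, hm⟩ := (hmem f).1 hf
      exact ⟨⟨(f, m), mem_mulPullback.2 hm.symm⟩, rfl⟩
  exact T.congr (LinearEquiv.ofBijective e he).symm (T.ker q hq hF hM)

/-- Passing to a syzygy: the pullback for `π` is covered by `G × F`, with kernel the pullback
for `π'`. -/
lemma mulPullback_mem_of_syzygy (T : IsThickSubcat R P) {G K : Type u} [AddCommGroup G]
    [Module R G] [AddCommGroup K] [Module R K] (π : F →ₗ[R] M) (hπ : Function.Surjective π)
    (j : K →ₗ[R] F) (hj : Function.Injective j) (hex : Function.Exact j π)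
    (π' : G →ₗ[R] K) (hπ' : Function.Surjective π') (x : R)
    (hF : P (ModuleCat.of R F)) (hG : P (ModuleCat.of R G))
    (hQ : P (ModuleCat.of R (mulPullback π x))) : P (ModuleCat.of R (mulPullback π' x)) := by
  let Φ : (G × F) →ₗ[R] mulPullback π x :=
    LinearMap.codRestrict _
      (((j ∘ₗ π').coprod (x • LinearMap.id)).prod (π ∘ₗ LinearMap.snd R G F)) (by
        rintro ⟨g, f⟩
        rw [mem_mulPullback]
        simp [hex.apply_apply_eq_zero])
  let Ψ : mulPullback π' x →ₗ[R] (G × F) :=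
    (LinearMap.id.prodMap (-j)) ∘ₗ (mulPullback π' x).subtype
  refine T.left Ψ Φ ?_ ?_ ?_ (T.prod hG hF) hQ
  · rintro ⟨⟨g, w⟩, hz⟩ ⟨⟨g', w'⟩, hz'⟩ h
    have h1 : g = g' := congrArg Prod.fst h
    have h2 : -j w = -j w' := congrArg Prod.snd h
    exact Subtype.ext (Prod.ext h1 (hj (neg_injective h2)))
  · rintro ⟨⟨f, m⟩, hz⟩
    have hz : π f = x • m := mem_mulPullback.1 hz
    obtain ⟨f₀, rfl⟩ := hπ m
    obtain ⟨k, hk⟩ := (hex (f - x • f₀)).1 (by rw [map_sub, map_smul, hz, sub_self])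
    obtain ⟨g, rfl⟩ := hπ' k
    refine ⟨(g, f₀), Subtype.ext (Prod.ext ?_ rfl)⟩
    change j (π' g) + x • f₀ = f
    rw [hk, sub_add_cancel]
  · rintro ⟨g, f⟩
    constructor
    · intro h
      have h1 : j (π' g) + x • f = 0 := congrArg (fun z => z.1.1) h
      have h2 : π f = 0 := congrArg (fun z => z.1.2) h
      obtain ⟨w, rfl⟩ := (hex f).1 h2
      refine ⟨⟨(g, -w), mem_mulPullback.2 (hj ?_)⟩, ?_⟩
      · change j (π' g) = j (x • (-w))
        rw [map_smul, map_neg, smul_neg]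
        exact eq_neg_of_add_eq_zero_left h1
      · change (g, -j (-w)) = (g, j w)
        rw [map_neg, neg_neg]
    · rintro ⟨⟨⟨g', w⟩, hz⟩, h⟩
      have hz : π' g' = x • w := mem_mulPullback.1 hz
      have h1 : g' = g := congrArg Prod.fst h
      have h2 : -j w = f := congrArg Prod.snd h
      subst h1 h2
      refine Subtype.ext (Prod.ext ?_ ?_)
      · change j (π' g') + x • -j w = 0
        rw [hz, map_smul, smul_neg, add_neg_cancel]
      · change π (-j w) = 0
        rw [map_neg, hex.apply_apply_eq_zero, neg_zero]

lemma mem_of_mulPullback_mem (T : IsThickSubcat R P) (π : F →ₗ[R] M) (x : R) (s : M →ₗ[R] F)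
    (hs : π ∘ₗ s = x • LinearMap.id) (hQ : P (ModuleCat.of R (mulPullback π x))) :
    P (ModuleCat.of R M) :=
  T.summand
    (LinearMap.codRestrict (mulPullback π x) (s.prod LinearMap.id) fun m =>
      mem_mulPullback.2 (LinearMap.congr_fun hs m))
    (LinearMap.snd R F M ∘ₗ (mulPullback π x).subtype) (fun _ => rfl) hQ

end Pullback

/-! ### Localizing syzygies -/

section Localize

variable {R : Type u} [CommRing R]

/-- A section of the localization of `π` descends to a section up to a scalar in `S`. -/
lemma exists_section_of_projective_localized (S : Submonoid R) {F N : Type u} [AddCommGroup F]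
    [Module R F] [AddCommGroup N] [Module R N] [Module.FinitePresentation R N]
    (π : F →ₗ[R] N) (hπ : Function.Surjective π)
    (hN : Module.Projective (Localization S) (LocalizedModule S N)) :
    ∃ x ∈ S, ∃ s : N →ₗ[R] F, π ∘ₗ s = x • LinearMap.id := by
  obtain ⟨σ, hσ⟩ := Module.projective_lifting_property (LocalizedModule.map S π) LinearMap.id
    (LocalizedModule.map_surjective S _ hπ)
  obtain ⟨s, t, hs⟩ := Module.FinitePresentation.exists_lift_of_isLocalizedModule S
    (LocalizedModule.mkLinearMap S F) ((σ.restrictScalars R) ∘ₗ LocalizedModule.mkLinearMap S N)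
  obtain ⟨v, hv⟩ := Module.Finite.exists_smul_of_comp_eq_of_isLocalizedModule S
    (LocalizedModule.mkLinearMap S N) (π ∘ₗ s) ((t : R) • LinearMap.id) (by
      ext n
      have h1 := congrArg (LocalizedModule.map S π) (LinearMap.congr_fun hs n)
      have h2 : LocalizedModule.map S π (σ (LocalizedModule.mkLinearMap S N n)) =
        LocalizedModule.mkLinearMap S N n := LinearMap.congr_fun hσ _
      have h3 : LocalizedModule.map S π (t • σ (LocalizedModule.mkLinearMap S N n)) =
          t • LocalizedModule.map S π (σ (LocalizedModule.mkLinearMap S N n)) :=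
        ((LocalizedModule.map S π).restrictScalars R).map_smul (t : R) _
      have h4 : LocalizedModule.map S π (LocalizedModule.mkLinearMap S F (s n)) =
        LocalizedModule.mkLinearMap S N (π (s n)) := LocalizedModule.map_mk S π (s n) 1
      rw [LinearMap.comp_apply, h4] at h1
      change _ = LocalizedModule.mkLinearMap S N ((t : R) • n)
      rw [LinearMap.comp_apply, LinearMap.comp_apply, h1, map_smul]
      exact h3.trans (congrArg _ h2))
  refine ⟨v * t, S.mul_mem v.2 t.2, (v : R) • s, ?_⟩
  rw [LinearMap.comp_smul, mul_smul]
  exact hv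

lemma nonempty_residue_equiv_localized (p : Ideal R) [p.IsPrime] :
    Nonempty ((Localization.AtPrime p ⧸ maximalIdeal (Localization.AtPrime p))
      ≃ₗ[Localization.AtPrime p] LocalizedModule p.primeCompl (R ⧸ p)) := by
  let f := LinearMap.toSpanSingleton (Localization.AtPrime p)
    (LocalizedModule p.primeCompl (R ⧸ p)) (LocalizedModule.mk 1 1)
  have hf : ∀ (r : R) (s : p.primeCompl),
      f (Localization.mk r s) = LocalizedModule.mk (Ideal.Quotient.mk p r) s := by
    intro r s
    rw [LinearMap.toSpanSingleton_apply, LocalizedModule.mk_smul_mk, mul_one]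
    congr 1
    exact congrArg (Ideal.Quotient.mk p) (mul_one r)
  have hsurj : Function.Surjective f := by
    intro z
    induction z using LocalizedModule.induction_on with
    | h m s =>
      obtain ⟨r, rfl⟩ := Ideal.Quotient.mk_surjective m
      exact ⟨Localization.mk r s, hf r s⟩
  have hker : LinearMap.ker f = maximalIdeal (Localization.AtPrime p) := by
    ext z
    induction z using Localization.induction_on with
    | H y =>
      obtain ⟨r, s⟩ := y
      rw [LinearMap.mem_ker, hf, Localization.mk_eq_mk',
        IsLocalization.AtPrime.mk'_mem_maximal_iff (Localization.AtPrime p) p,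
        ← LocalizedModule.zero_mk s, LocalizedModule.mk_eq]
      constructor
      · rintro ⟨v, hv⟩
        rw [smul_zero, smul_zero] at hv
        have h1 : Ideal.Quotient.mk p (v * (s * r)) = 0 := hv
        rw [Ideal.Quotient.eq_zero_iff_mem] at h1
        exact (Ideal.IsPrime.mem_or_mem ‹_›
          ((Ideal.IsPrime.mem_or_mem ‹_› h1).resolve_left v.2)).resolve_left s.2
      · intro hr
        rw [Ideal.Quotient.eq_zero_iff_mem.2 hr]
        exact ⟨1, rfl⟩
  exact ⟨(Submodule.quotEquivOfEq _ _ hker).symm ≪≫ₗ f.quotKerEquivOfSurjective hsurj⟩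

variable [IsLocalRing R] [IsNoetherianRing R]

lemma PD_localized_syz (S : Submonoid R) (M : {M : ModuleCat.{u} R // Module.Finite R M})
    (n i : ℕ) : PD (Localization S) (LocalizedModule S M.1) (n + i) ↔
      PD (Localization S) (LocalizedModule S (syz M i).1) n := by
  induction i generalizing n with
  | zero => rfl
  | succ i ih =>
    rw [show n + (i + 1) = (n + 1) + i by omega, ih]
    exact PD_succ_iff (LocalizedModule.map S (syzIncl M i)) (LocalizedModule.map S (cover (syz M i)))
      (LocalizedModule.map_injective S _ (syzIncl_injective M i))
      (LocalizedModule.map_surjective S _ (cover_surjective _))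
      (LocalizedModule.map_exact S _ _ (exact_syzIncl_cover M i)) n

end Localize

/-! ### From the residue field to all finitely generated modules -/

section Generation

variable {R : Type u} [CommRing R] [IsLocalRing R] [IsNoetherianRing R]
  {P : ModuleCat.{u} R → Prop}

/-- If `R_𝔭` is regular and `R / (𝔭 + (x))` lies in the thick subcategory for all `x ∉ 𝔭`, then
so does `R / 𝔭`: some syzygy of `R / 𝔭` is free at `𝔭`, so its cover splits up to some `x ∉ 𝔭`
and the syzygy is a summand of a pullback module. -/
lemma quotient_prime_mem (T : IsThickSubcat R P) (hR : P (ModuleCat.of R R)) (p : Ideal R)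
    [hp : p.IsPrime] (hreg : IsRegularLocal (Localization.AtPrime p))
    (hx : ∀ x ∉ p, P (ModuleCat.of R (QuotSMulTop x (R ⧸ p)))) :
    P (ModuleCat.of R (R ⧸ p)) := by
  obtain ⟨d, hd⟩ := hreg.exists_PD
  obtain ⟨e⟩ := nonempty_residue_equiv_localized p
  let M : {M : ModuleCat.{u} R // Module.Finite R M} :=
    ⟨ModuleCat.of R (R ⧸ p), by change Module.Finite R (R ⧸ p); infer_instance⟩
  have hd' : PD (Localization.AtPrime p) (LocalizedModule p.primeCompl M.1) (0 + d) := by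
    rw [zero_add]
    have : HasProjectiveDimensionLT (ModuleCat.of (Localization.AtPrime p)
      (Localization.AtPrime p ⧸ maximalIdeal (Localization.AtPrime p))) (d + 1) := hd
    exact hasProjectiveDimensionLT_of_iso e.toModuleIso _
  have hproj := PD_zero_iff.1 ((PD_localized_syz p.primeCompl M 0 d).1 hd')
  have := (syz M d).2
  have := Module.finitePresentation_of_finite R (syz M d).1
  obtain ⟨x, hxp, s, hs⟩ := exists_section_of_projective_localized p.primeCompl
    (cover (syz M d)) (cover_surjective _) hproj
  have hxreg : IsSMulRegular M.1 x := by
    intro a b hab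
    obtain ⟨a, rfl⟩ := Ideal.Quotient.mk_surjective a
    obtain ⟨b, rfl⟩ := Ideal.Quotient.mk_surjective b
    have h1 : Ideal.Quotient.mk p (x * a) = Ideal.Quotient.mk p (x * b) := hab
    rw [Ideal.Quotient.eq, ← mul_sub] at h1
    exact Ideal.Quotient.eq.2 ((hp.mem_or_mem h1).resolve_left hxp)
  have hQ : ∀ i, P (ModuleCat.of R (mulPullback (cover (syz M i)) x)) := by
    intro i
    induction i with
    | zero => exact mulPullback_mem T _ (cover_surjective _) hxreg (T.free hR _) (hx x hxp)
    | succ i ih =>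
      exact mulPullback_mem_of_syzygy T _ (cover_surjective _) (syzIncl M i)
        (syzIncl_injective M i) (exact_syzIncl_cover M i) _ (cover_surjective _) x
        (T.free hR _) (T.free hR _) ih
  have hsyz : P (syz M d).1 := mem_of_mulPullback_mem T _ x s hs (hQ d)
  have hdown : ∀ i, P (syz M i).1 → P M.1 := by
    intro i
    induction i with
    | zero => exact id
    | succ i ih => exact fun h => ih (T.of_ker _ (cover_surjective (syz M i)) (T.free hR _) h)
  exact hdown d hsyz

/-- Over an isolated singularity, a thick subcategory containing `R` and the residue field is
everything, by noetherian induction on an ideal annihilating the module. -/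
theorem mem_of_residue_mem (hiso : HasIsolatedSingularity R) (T : IsThickSubcat R P)
    (hR : P (ModuleCat.of R R)) (hk : P (ModuleCat.of R (R ⧸ maximalIdeal R)))
    (A : Type u) [AddCommGroup A] [Module R A] [hfin : Module.Finite R A] :
    P (ModuleCat.of R A) := by
  have main : ∀ J : Ideal R, ∀ (N : Type u) [AddCommGroup N] [Module R N] [Module.Finite R N],
      (∀ r ∈ J, ∀ n : N, r • n = 0) → P (ModuleCat.of R N) := by
    intro J
    induction J using IsNoetherian.induction with
    | hgt J ih =>
    intro N _ _ hN
    induction hN using IsNoetherianRing.induction_on_isQuotientEquivQuotientPrime R with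
    | subsingleton N => exact fun _ => T.subsingleton hR N
    | quotient N p f =>
      intro hJ
      refine T.congr f.symm ?_
      have hkill : ∀ r ∈ J, ∀ n : R ⧸ p.asIdeal, r • n = 0 := by
        intro r hr n
        rw [← f.apply_symm_apply n, ← map_smul, hJ r hr, map_zero]
      have hle : J ≤ p.asIdeal := by
        intro r hr
        have h1 : Ideal.Quotient.mk p.asIdeal (r * 1) = 0 := hkill r hr 1
        rwa [mul_one, Ideal.Quotient.eq_zero_iff_mem] at h1
      obtain hlt | heq := hle.lt_or_eq
      · refine ih p.asIdeal hlt (R ⧸ p.asIdeal) ?_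
        intro r hr n
        obtain ⟨n, rfl⟩ := Ideal.Quotient.mk_surjective n
        exact Ideal.Quotient.eq_zero_iff_mem.2 (p.asIdeal.mul_mem_right n hr)
      · by_cases hm : p.asIdeal = maximalIdeal R
        · rw [hm]; exact hk
        · refine quotient_prime_mem T hR p.asIdeal (hiso p.asIdeal hm) ?_
          intro x hx
          refine ih (p.asIdeal ⊔ Ideal.span {x}) ?_ _ ?_
          · rw [heq]
            refine lt_of_le_of_ne le_sup_left fun h => hx ?_
            rw [h]
            exact Ideal.mem_sup_right (Ideal.mem_span_singleton_self x)
          · intro r hr n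
            obtain ⟨n, rfl⟩ := Submodule.mkQ_surjective _ n
            obtain ⟨n, rfl⟩ := Ideal.Quotient.mk_surjective n
            obtain ⟨a, ha, b, hb, rfl⟩ := Submodule.mem_sup.1 hr
            obtain ⟨c, rfl⟩ := Ideal.mem_span_singleton'.1 hb
            rw [← map_smul, Submodule.mkQ_apply, Submodule.Quotient.mk_eq_zero]
            have h1 : a • Ideal.Quotient.mk p.asIdeal n = 0 :=
              Ideal.Quotient.eq_zero_iff_mem.2 (p.asIdeal.mul_mem_right n ha)
            rw [add_smul, h1, zero_add, mul_comm, mul_smul]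
            exact Submodule.smul_mem_pointwise_smul _ _ _ trivial
    | exact N₁ N₂ N₃ f g hf hg hex h₁ h₃ =>
      intro hJ
      refine T.middle f g hf hg hex (h₁ fun r hr n => hf ?_) (h₃ fun r hr n => ?_)
      · rw [map_smul, hJ r hr, map_zero]
      · obtain ⟨n, rfl⟩ := hg n
        rw [← map_smul, hJ r hr, map_zero]
  refine main ⊥ A ?_
  rintro r rfl n
  exact zero_smul R n

end Generation

/-- **Corollary 6.3(1).** Suppose `R` has an isolated singularity and `𝔪` is quasi-decomposable
with an `R`-regular sequence `𝐱` of length `n`. If `𝒳` is a thick subcategory of `mod R`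
containing `R` and a module of projective dimension `≥ n + 2`, then `𝒳 = mod R`. -/
theorem thick_subcat_eq_mod_of_isolated_singularity
    (R : Type u) [CommRing R] [IsNoetherianRing R] [IsLocalRing R]
    (hiso : HasIsolatedSingularity R)
    (x : List R) (hxm : ∀ a ∈ x, a ∈ maximalIdeal R)
    (hxreg : RingTheory.Sequence.IsRegular R x)
    (hdec : IsDecomposableModule (R ⧸ Ideal.ofList x)
      (↥((maximalIdeal R).map (Ideal.Quotient.mk (Ideal.ofList x)))))
    (P : ModuleCat.{u} R → Prop) (hthick : IsThickSubcat R P)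
    (hR : P (ModuleCat.of R R))
    (hbig : ∃ (A : Type u) (_ : AddCommGroup A) (_ : Module R A), Module.Finite R A ∧
      P (ModuleCat.of R A) ∧ ¬ ProjDimLE R A (x.length + 1)) :
    ∀ A : ModuleCat.{u} R, Module.Finite R A → P A := by
  obtain ⟨A, _, _, hfin, hA, hpd⟩ := hbig
  have hk := residue_mem_of_isDecomposableModule R hthick hR x hxm hxreg.toIsWeaklyRegular hdec A hA
    (fun h => hpd (projDimLE_of_PD A _ h))
  intro B hB
  exact mem_of_residue_mem hiso hthick hR hk B
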